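/- Let w be in B_n, a := w(1), 1 ≤ p ≤ n, p < q < s ≤ n, c := w(q), b := -c, and suppose a ≺ b. Let Delta(s) denote the suffix of Delta beginning with (1,s). Then, in Z[t], the sum over all increasing-admissible subsequences T of Delta(s) with (wT)(1) = b of t^{(l(wT) - l(w) - |T|)/2} (1-t)^{|T|} equals t^{N_{ab}(w[2,q-1], w[q+1,s-1]) + tau'_{ac}} (1-t), where tau'_{ac} := 1 if 0 < a < c and 0 otherwise. -/

import Mathlib

/-!
Write `b = -c` with `c = w(q)`. All reflections in the chain move the first entry, and an admissible
one strictly increases it for `≺`. Reading the chain from the left, the weighted sum over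
subsequences satisfies a recursion (`chainSum`): the first reflection is either skipped, or taken
with weight `t^{(l(wt) - l(w) - 1)/2} (1 - t)`. The exact length changes are `len_swap`,
`len_swapNeg` and `len_negFirst`; they are all odd, so the exponents add up along a subsequence and
the sum in the theorem is `chainSum` (`subSum_weight`, `sum_powerset_selChain`).

Since position `q` is touched only by `(1,-q)`, the first entry becomes `b` exactly when `(1,-q)` is
taken, and nothing can be taken afterwards (`deltaSuffixNeg_zero`, `deltaSuffixNeg_one`). Going
backwards from `(1,-q)`, the sum over each longer suffix is again `t^e (1 - t)` if `x = w(1) ≺ b`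
and `0` otherwise, for an explicit `e`: prepending a reflection that would make the first entry `z`
changes nothing unless `x ≺ z ≺ b`, and in that case the identity `t^{e+1} + (1 - t) t^e = t^e`
lowers the exponent by one (`combine`). For the window `x A c B C` with `c` in position `q` the
exponents are

* suffix from `(1,-r)`, `r` the last position of `B`: `N_{xb}(A, B, C, -C) + [x > 0 > b]`
  (`neg_stage`);
* suffix from `(1,-1)`: `N_{xb}(A, B, C) + [0 < x < c]` (`bar_stage`);
* suffix from `(1,s)`, `s` the first position of `C`: `N_{xb}(A, B) + [0 < x < c]` (`pos_stage`).
-/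

open scoped BigOperators

namespace HL

/-! ### The order `≺` on nonzero integers in `[-n,n]`:
`1 ≺ 2 ≺ ... ≺ n ≺ -n ≺ -(n-1) ≺ ... ≺ -1`. -/

def slt (a b : ℤ) : Prop :=
  (0 < a ∧ b < 0) ∨ (0 < a ∧ 0 < b ∧ a < b) ∨ (a < 0 ∧ b < 0 ∧ a < b)

instance slt.dec (a b : ℤ) : Decidable (slt a b) := by unfold slt; infer_instance

def sle (a b : ℤ) : Prop := slt a b ∨ a = b

instance sle.dec (a b : ℤ) : Decidable (sle a b) := by unfold sle; infer_instance

/-! ### Signed permutations (windows), reflections acting on the right -/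

/-- The right action of a reflection on a window (or column), with 1-based
positions.  The reflection `(i, j)` with `j > 0` transposes positions `i` and
`j`; the reflection `(i, -j)` (i.e. `(i,\bar\jmath)`) with `i ≠ j` transposes
positions `i, j` and negates both entries; `(i, -i)` negates position `i`. -/
def applyRefl (l : List ℤ) (t : ℕ × ℤ) : List ℤ :=
  if 0 < t.2 then
    (l.set (t.1 - 1) (l.getD (t.2.toNat - 1) 0)).set (t.2.toNat - 1) (l.getD (t.1 - 1) 0)
  else
    if t.1 = (-t.2).toNat then l.set (t.1 - 1) (-(l.getD (t.1 - 1) 0))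
    else (l.set (t.1 - 1) (-(l.getD ((-t.2).toNat - 1) 0))).set ((-t.2).toNat - 1)
          (-(l.getD (t.1 - 1) 0))

def applyAll (w : List ℤ) (T : List (ℕ × ℤ)) : List ℤ := T.foldl applyRefl w

/-- The word `w[i,j] = w(i) w(i+1) ... w(j)`, 1-based and inclusive. -/
def word (l : List ℤ) (i j : ℕ) : List ℤ := (l.drop (i - 1)).take (j + 1 - i)

/-- `N_{ab}(u)` = number of letters `c` of the word `u` with `a ≺ c ≺ b`. -/
def Nab (a b : ℤ) (u : List ℤ) : ℕ :=
  (u.filter (fun c => decide (slt a c ∧ slt c b))).length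

/-- `ℓ₊(w) = #{(k,l) : k < l, w(k) ≻ w(l)}`. -/
def lplus (l : List ℤ) : ℕ :=
  (((Finset.range l.length) ×ˢ (Finset.range l.length)).filter
    (fun p => p.1 < p.2 ∧ slt (l.getD p.2 0) (l.getD p.1 0))).card

/-- `ℓ₋(w) = #{(k,l) : k ≤ l, w(k) ≻ -w(l)}`. -/
def lminus (l : List ℤ) : ℕ :=
  (((Finset.range l.length) ×ˢ (Finset.range l.length)).filter
    (fun p => p.1 ≤ p.2 ∧ slt (-(l.getD p.2 0)) (l.getD p.1 0))).card

/-- The Coxeter length of a signed permutation given by its window. -/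
def len (l : List ℤ) : ℕ := lplus l + lminus l

/-- The (finite) set of windows of all signed permutations in `B_n`. -/
def allWindows (n : ℕ) : Finset (List ℤ) :=
  Finset.image (fun w : Equiv.Perm (Fin n) × (Fin n → Bool) =>
    (List.finRange n).map (fun i =>
      if w.2 i then -(((w.1 i : ℕ) : ℤ) + 1) else ((w.1 i : ℕ) : ℤ) + 1)) Finset.univ

/-- `w`-admissibility of a sequence of reflections: a strictly decreasing
chain in Bruhat order (recorded via the length function). -/
def decChain : List ℤ → List (ℕ × ℤ) → Bool
  | _, [] => true
  | w, t :: ts => (decide (len (applyRefl w t) < len w)) && decChain (applyRefl w t) ts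

/-- Increasing-admissibility: a strictly increasing chain. -/
def incChain : List ℤ → List (ℕ × ℤ) → Bool
  | _, [] => true
  | w, t :: ts => (decide (len w < len (applyRefl w t))) && incChain (applyRefl w t) ts

/-- The subsequence of a chain `Γ` selected by a set `J` of (0-based) positions. -/
def selChain (Γ : List (ℕ × ℤ)) (J : Finset ℕ) : List (ℕ × ℤ) :=
  (J.sort (· ≤ ·)).map (fun j => Γ.getD j (0, 0))

/-! ### The `λ`-chain of type `C_n` -/

/-- `Γ'_j = ((1,-j),(2,-j),...,(j-1,-j))`. -/
def gammaPrime (j : ℕ) : List (ℕ × ℤ) := (List.range (j - 1)).map (fun r => (r + 1, -(j : ℤ)))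

/-- `Γ_j(k) = ((1,-j),...,(j-1,-j),(j,-(k+1)),...,(j,-n),(j,-j),(j,n),...,(j,k+1))`. -/
def gammaJK (n j k : ℕ) : List (ℕ × ℤ) :=
  gammaPrime j
    ++ (List.range (n - k)).map (fun r => (j, -((k + 1 + r : ℕ) : ℤ)))
    ++ [(j, -(j : ℤ))]
    ++ (List.range (n - k)).map (fun r => (j, ((n - r : ℕ) : ℤ)))

/-- `Γ(k) = Γ'_2 ⋯ Γ'_k Γ_1(k) ⋯ Γ_k(k)` (type `C_n`). -/
def gammaChain (n k : ℕ) : List (ℕ × ℤ) :=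
  ((List.range (k - 1)).map (fun r => gammaPrime (r + 2))).flatten
    ++ ((List.range k).map (fun r => gammaJK n (r + 1) k)).flatten

/-- `λ'_i = #{j : λ_j ≥ i}`, the conjugate partition. -/
def conj (n : ℕ) (lam : Fin n → ℕ) (i : ℕ) : ℕ :=
  (Finset.univ.filter (fun j : Fin n => i ≤ lam j)).card

/-- `λ_1`, the largest part. -/
def lamOne (n : ℕ) (lam : Fin n → ℕ) : ℕ := Finset.univ.sup lam

/-- The fixed `λ`-chain `Γ = Γ^{λ_1} Γ^{λ_1-1} ⋯ Γ^1` with `Γ^i = Γ(λ'_i)`. -/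
def lambdaChain (n : ℕ) (lam : Fin n → ℕ) : List (ℕ × ℤ) :=
  ((List.range (lamOne n lam)).map
    (fun r => gammaChain n (conj n lam (lamOne n lam - r)))).flatten

/-- The set `A(λ)` of admissible pairs `(w, J)`. -/
def ASet (n : ℕ) (lam : Fin n → ℕ) : Set (List ℤ × Finset ℕ) :=
  {p | p.1 ∈ allWindows n ∧ p.2 ⊆ Finset.range (lambdaChain n lam).length ∧
    decChain p.1 (selChain (lambdaChain n lam) p.2) = true}

/-! ### Roots, coroots, affine reflections, and the weight `μ(T)` -/

/-- The root of type `C_n` corresponding to a symbol: `(i,j) ↦ ε_i - ε_j`,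
`(i,-j) ↦ ε_i + ε_j` for `i < j`, and `(i,-i) ↦ 2ε_i`. -/
def rootVec (n : ℕ) (β : ℕ × ℤ) : Fin n → ℤ := fun r =>
  (if ((r : ℕ) + 1 : ℤ) = (β.1 : ℤ) then 1 else 0) +
  (if 0 < β.2 then (if ((r : ℕ) + 1 : ℤ) = β.2 then -1 else 0)
   else (if ((r : ℕ) + 1 : ℤ) = -β.2 then 1 else 0))

/-- The coroot (type `C_n`): `(2ε_i)^∨ = ε_i`, the long rootss are unchanged. -/
def corootVec (n : ℕ) (β : ℕ × ℤ) : Fin n → ℤ :=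
  if β.2 = -(β.1 : ℤ) then (fun r => if ((r : ℕ) + 1 : ℤ) = (β.1 : ℤ) then 1 else 0)
  else rootVec n β

/-- Standard inner product on `ℤ^n`. -/
def ip (n : ℕ) (u v : Fin n → ℤ) : ℤ := ∑ r, u r * v r

/-- The affine reflection in the hyperplane `{v : ⟨v, β^∨⟩ = c}`. -/
def affRefl (n : ℕ) (β : ℕ × ℤ) (c : ℤ) (v : Fin n → ℤ) : Fin n → ℤ :=
  fun r => v r - (ip n v (corootVec n β) - c) * rootVec n β r

/-- `l_k = #{j ≤ k : β_j = β_k}` (here `k` is 0-based). -/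
def lCount (Γ : List (ℕ × ℤ)) (k : ℕ) : ℕ := (Γ.take (k + 1)).count (Γ.getD k (0, 0))

/-- `μ(J) = \hat r_{j_1} ⋯ \hat r_{j_s}(λ)` for `J = {j_1 < ... < j_s}`. -/
def muJ (n : ℕ) (Γ : List (ℕ × ℤ)) (lamVec : Fin n → ℤ) (J : Finset ℕ) : Fin n → ℤ :=
  (J.sort (· ≤ ·)).foldr (fun j v => affRefl n (Γ.getD j (0, 0)) ((lCount Γ j : ℕ) : ℤ) v) lamVec

/-- The linear action of a signed permutation (given by its window) on `ℤ^n`: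
`w(ε_i) = ε_{w(i)}` with `ε_{-i} = -ε_i`. -/
def wAct (n : ℕ) (w : List ℤ) (v : Fin n → ℤ) : Fin n → ℤ := fun r =>
  ∑ i : Fin n, ((if w.getD i 0 = ((r : ℕ) + 1 : ℤ) then v i else 0) +
    (if w.getD i 0 = -(((r : ℕ) + 1 : ℤ)) then -(v i) else 0))

def lamVec (n : ℕ) (lam : Fin n → ℕ) : Fin n → ℤ := fun i => (lam i : ℤ)

/-! ### Fillings of the doubled shape `\hat λ` -/

/-- A filling of the doubled shape, recorded by its primed columns `C'_{i,k}`
(`Cp i k`) and unprimed columns `C_{i,j}` (`Cu i j`). -/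
structure Filling where
  Cp : ℕ → ℕ → List ℤ
  Cu : ℕ → ℕ → List ℤ

def validP (n : ℕ) (lam : Fin n → ℕ) (i k : ℕ) : Prop :=
  1 ≤ i ∧ i ≤ lamOne n lam ∧ 2 ≤ k ∧ k ≤ conj n lam i

def validU (n : ℕ) (lam : Fin n → ℕ) (i j : ℕ) : Prop :=
  1 ≤ i ∧ i ≤ lamOne n lam ∧ 1 ≤ j ∧ j ≤ conj n lam i ∧ (i = 1 → j = 1)

instance validP.dec (n : ℕ) (lam : Fin n → ℕ) (i k : ℕ) : Decidable (validP n lam i k) := by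
  unfold validP; infer_instance

instance validU.dec (n : ℕ) (lam : Fin n → ℕ) (i j : ℕ) : Decidable (validU n lam i j) := by
  unfold validU; infer_instance

/-- The right neighbour `C'_{i,k+1}` of `C'_{i,k}`, with the convention
`C'_{i,λ'_i+1} = C_{i,1}`. -/
def CpNxt (n : ℕ) (lam : Fin n → ℕ) (F : Filling) (i k : ℕ) : List ℤ :=
  if k < conj n lam i then F.Cp i (k + 1) else F.Cu i 1

/-- The right neighbour `C_{i,j+1}` of `C_{i,j}`, with the conventions
`C_{i,λ'_i+1} = C'_{i-1,2}` (if `λ'_{i-1} > 1`) and `C_{i,λ'_i+1} = C_{i-1,1}`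
(if `λ'_{i-1} = 1`). -/
def CuNxt (n : ℕ) (lam : Fin n → ℕ) (F : Filling) (i j : ℕ) : List ℤ :=
  if j < conj n lam i then F.Cu i (j + 1)
  else if 2 ≤ conj n lam (i - 1) then F.Cp (i - 1) 2 else F.Cu (i - 1) 1

/-- No two entries `a, b` of a column with `a = ±b`. -/
def colDistinct (c : List ℤ) : Prop :=
  ∀ p q : ℕ, p < q → q < c.length →
    c.getD p 0 ≠ c.getD q 0 ∧ c.getD p 0 ≠ -(c.getD q 0)

/-- `R = (r_1 < r_2 < ... < r_p)` with `1 ≤ r_t < j ≤ d`. -/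
def sortedR (R : List ℕ) (j d : ℕ) : Prop :=
  List.Chain' (· < ·) R ∧ (∀ r ∈ R, 1 ≤ r ∧ r < j) ∧ 1 ≤ j ∧ j ≤ d

/-- `D (r_1,-j) (r_2,-j) ⋯ (r_p,-j)`. -/
def cycleApply (D : List ℤ) (R : List ℕ) (j : ℕ) : List ℤ :=
  R.foldl (fun E r => applyRefl E (r, -(j : ℤ))) D

/-- The relation between `C_{i,j+1}[1,λ'_i] = E` and `C_{i,j} = D` in a filling:
`E` differs from `D' = D(r_1,-j)⋯(r_p,-j)` only in position `j`,
`E(j) ∉ {±D'(r) : r ≠ j}` and `E(j) ⪯ D'(j)`. -/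
def unprimedTrans (D E : List ℤ) (R : List ℕ) (j d : ℕ) : Prop :=
  (∀ r, 1 ≤ r → r ≤ d → r ≠ j →
    E.getD (r - 1) 0 = (cycleApply D R j).getD (r - 1) 0) ∧
  (∀ r, 1 ≤ r → r ≤ d → r ≠ j →
    E.getD (j - 1) 0 ≠ (cycleApply D R j).getD (r - 1) 0 ∧
    E.getD (j - 1) 0 ≠ -((cycleApply D R j).getD (r - 1) 0)) ∧
  sle (E.getD (j - 1) 0) ((cycleApply D R j).getD (j - 1) 0)

/-- The set `F(λ)` of fillings of the doubled shape `\hat λ`. -/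
def FSet (n : ℕ) (lam : Fin n → ℕ) : Set Filling :=
  {F |
    -- shape
    (∀ i k, (validP n lam i k → (F.Cp i k).length = conj n lam i) ∧
      (¬ validP n lam i k → F.Cp i k = [])) ∧
    (∀ i j, (validU n lam i j → (F.Cu i j).length = conj n lam i) ∧
      (¬ validU n lam i j → F.Cu i j = [])) ∧
    -- entries lie in `{±1, ..., ±n}`
    (∀ i k, validP n lam i k → ∀ a ∈ F.Cp i k, 1 ≤ a.natAbs ∧ a.natAbs ≤ n) ∧
    (∀ i j, validU n lam i j → ∀ a ∈ F.Cu i j, 1 ≤ a.natAbs ∧ a.natAbs ≤ n) ∧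
    -- (1) rows weakly decrease from left to right
    (∀ i k, validP n lam i k → ∀ r, 1 ≤ r → r ≤ conj n lam i →
      sle ((CpNxt n lam F i k).getD (r - 1) 0) ((F.Cp i k).getD (r - 1) 0)) ∧
    (∀ i j, 2 ≤ i → validU n lam i j → ∀ r, 1 ≤ r → r ≤ conj n lam i →
      sle ((CuNxt n lam F i j).getD (r - 1) 0) ((F.Cu i j).getD (r - 1) 0)) ∧
    -- (2) no column contains `a, b` with `a = ±b`
    (∀ i k, validP n lam i k → colDistinct (F.Cp i k)) ∧
    (∀ i j, validU n lam i j → colDistinct (F.Cu i j)) ∧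
    -- (3) primed transitions: `C'_{i,k+1} = C'_{i,k}(r_1,-k)⋯(r_p,-k)`
    (∀ i k, validP n lam i k → ∃ R : List ℕ, sortedR R k (conj n lam i) ∧
      CpNxt n lam F i k = cycleApply (F.Cp i k) R k) ∧
    -- (3) unprimed transitions
    (∀ i j, 2 ≤ i → validU n lam i j → ∃ R : List ℕ, sortedR R j (conj n lam i) ∧
      unprimedTrans (F.Cu i j) ((CuNxt n lam F i j).take (conj n lam i)) R j (conj n lam i))}

/-! ### The filling map `f` -/

/-- Offset in `Γ` of the beginning of block `Γ^i` (the blocks are listed for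
`i = λ_1` down to `1`). -/
def offsetBlock (n : ℕ) (lam : Fin n → ℕ) (i : ℕ) : ℕ :=
  ∑ r ∈ Finset.Ico (i + 1) (lamOne n lam + 1), (gammaChain n (conj n lam r)).length

/-- Offset in `Γ` of the beginning of the factor `Γ'_{i,k}`.-/
def offsetP (n : ℕ) (lam : Fin n → ℕ) (i k : ℕ) : ℕ :=
  offsetBlock n lam i + ∑ j ∈ Finset.Ico 2 k, (gammaPrime j).length

/-- Offset in `Γ` of the beginning of the factor `Γ_{i,j}`.-/
def offsetU (n : ℕ) (lam : Fin n → ℕ) (i j : ℕ) : ℕ :=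
  offsetBlock n lam i + (∑ k ∈ Finset.Ico 2 (conj n lam i + 1), (gammaPrime k).length)
    + ∑ j' ∈ Finset.Ico 1 j, (gammaJK n j' (conj n lam i)).length

/-- `π = w ⋅ (all selected reflections at positions < off)`. -/
def piW (n : ℕ) (lam : Fin n → ℕ) (w : List ℤ) (J : Finset ℕ) (off : ℕ) : List ℤ :=
  applyAll w (selChain (lambdaChain n lam) (J.filter (fun x => x < off)))

/-- The filling map `f`, sending an (admissible) pair `(w, J)` to a filling of
the doubled shape `\hat λ`. -/
def fMap (n : ℕ) (lam : Fin n → ℕ) (w : List ℤ) (J : Finset ℕ) : Filling where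
  Cp := fun i k => if validP n lam i k
    then (piW n lam w J (offsetP n lam i k)).take (conj n lam i) else []
  Cu := fun i j => if validU n lam i j
    then (piW n lam w J (offsetU n lam i j)).take (conj n lam i) else []

/-! ### Content of a filling -/

/-- The columns `\bar{C}^i = C'_{i,2} C_{i,1}` (left to right, `i = λ_1, ..., 1`)
of the compressed filling `\barσ` of shape `2λ`; by the conventions,
`C'_{i,2} = C_{i,1}` when `λ'_i = 1`. -/
def compCols (n : ℕ) (lam : Fin n → ℕ) (F : Filling) : List (List ℤ) :=
  ((List.range (lamOne n lam)).map (fun t =>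
    [(if 2 ≤ conj n lam (lamOne n lam - t) then F.Cp (lamOne n lam - t) 2
      else F.Cu (lamOne n lam - t) 1), F.Cu (lamOne n lam - t) 1])).flatten

/-- The content of a list of columns: the `i`-th coordinate is half the
difference between the numbers of occurrences of `i` and of `-i`. -/
def ctCols (n : ℕ) (cols : List (List ℤ)) : Fin n → ℚ := fun r =>
  ((cols.flatten.count (((r : ℕ) + 1 : ℕ) : ℤ) : ℚ) -
    (cols.flatten.count (-(((r : ℕ) + 1 : ℕ) : ℤ)) : ℚ)) / 2

/-- The content `ct(σ)` of a filling `σ` of `\hatλ`. -/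
def ctQ (n : ℕ) (lam : Fin n → ℕ) (F : Filling) : Fin n → ℚ :=
  ctCols n (compCols n lam F)

/-! ### The statistics `N(D,C)` and `des(D,C)` -/

/-- `σ_{ab} = 1` if `a` and `b` are both negative, else `0`. -/
def sigmaAB (a b : ℤ) : ℕ := if a < 0 ∧ b < 0 then 1 else 0

def allEntries (n : ℕ) : List ℤ :=
  (List.range n).map (fun r => ((r + 1 : ℕ) : ℤ)) ++
    (List.range n).map (fun r => -((r + 1 : ℕ) : ℤ))

/-- Case 1: `N(D, D(r,-j)) = N_{\bar b, a}(D[r+1,j-1]) +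
#{c : \bar b ≺ c ≺ a, c ∉ ±D[1,j]} + σ_{ab}` where `a = D(r)`, `b = D(j)`. -/
def N1 (n : ℕ) (D : List ℤ) (r j : ℕ) : ℕ :=
  Nab (-(D.getD (j - 1) 0)) (D.getD (r - 1) 0) (word D (r + 1) (j - 1)) +
  ((allEntries n).filter (fun c => decide (slt (-(D.getD (j - 1) 0)) c ∧
    slt c (D.getD (r - 1) 0) ∧ c ∉ D.take j ∧ c ∉ (D.take j).map (fun x => -x)))).length +
  sigmaAB (D.getD (r - 1) 0) (D.getD (j - 1) 0)

/-- Case 2: `N(D, D(r_1,-j)⋯(r_p,-j)) = ∑ N(D_{t-1}, D_t)`. -/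
def cycleN (n : ℕ) : List ℤ → List ℕ → ℕ → ℕ
  | _, [], _ => 0
  | D, r :: rs, j => N1 n D r j + cycleN n (applyRefl D (r, -(j : ℤ))) rs j

/-- The possible values `(N(D,C), des(D,C))` arising from the case-by-case
definition of the statistics (cases 0, 2, 3; case 1 is case 2 with `p = 1`).
If `C` is one box taller than `D`, `C` is replaced by `C[1,d]`. -/
def NdesCand (n : ℕ) (D C : List ℤ) : Set (ℕ × ℕ) :=
  {x |
    (C.take D.length = D ∧ x = (0, 0)) ∨
    (∃ j R, sortedR R j D.length ∧ R ≠ [] ∧ C.take D.length = cycleApply D R j ∧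
      x = (cycleN n D R j, R.length)) ∨
    (∃ j R, sortedR R j D.length ∧
      (∀ r, 1 ≤ r → r ≤ D.length → r ≠ j →
        (C.take D.length).getD (r - 1) 0 = (cycleApply D R j).getD (r - 1) 0) ∧
      (∀ r, 1 ≤ r → r ≤ D.length → r ≠ j →
        (C.take D.length).getD (j - 1) 0 ≠ (cycleApply D R j).getD (r - 1) 0 ∧
        (C.take D.length).getD (j - 1) 0 ≠ -((cycleApply D R j).getD (r - 1) 0)) ∧
      slt ((C.take D.length).getD (j - 1) 0) ((cycleApply D R j).getD (j - 1) 0) ∧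
      x = (cycleN n D R j +
        Nab ((C.take D.length).getD (j - 1) 0) ((cycleApply D R j).getD (j - 1) 0)
          (word D (j + 1) D.length), R.length + 1))}

noncomputable def Nstat (n : ℕ) (D C : List ℤ) : ℕ :=
  sInf {v | ∃ d, (v, d) ∈ NdesCand n D C}

noncomputable def desStat (n : ℕ) (D C : List ℤ) : ℕ :=
  sInf {d | ∃ v, (v, d) ∈ NdesCand n D C}

/-- All columns of a filling of `\hatλ`, listed from left to right. -/
def colList (n : ℕ) (lam : Fin n → ℕ) (F : Filling) : List (List ℤ) :=
  ((List.range (lamOne n lam)).map (fun t =>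
    ((List.range (conj n lam (lamOne n lam - t) - 1)).map
      (fun s => F.Cp (lamOne n lam - t) (s + 2))) ++
    (if lamOne n lam - t = 1 then [F.Cu 1 1]
     else (List.range (conj n lam (lamOne n lam - t))).map
      (fun s => F.Cu (lamOne n lam - t) (s + 1))))).flatten

/-- Sum of a binary statistic over adjacent pairs of a list. -/
def adjSumN (f : List ℤ → List ℤ → ℕ) : List (List ℤ) → ℕ
  | a :: b :: rest => f a b + adjSumN f (b :: rest)
  | _ => 0

/-- `N(σ) = ∑_{i=1}^{m-1} N(C_{i+1}, C_i) + ℓ₊(C_1)`. -/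
noncomputable def Nsigma (n : ℕ) (lam : Fin n → ℕ) (F : Filling) : ℕ :=
  adjSumN (Nstat n) (colList n lam F) + lplus ((colList n lam F).getLastD [])

/-- `des(σ) = ∑_{i=1}^{m-1} des(C_{i+1}, C_i)`. -/
noncomputable def desSigma (n : ℕ) (lam : Fin n → ℕ) (F : Filling) : ℕ :=
  adjSumN (desStat n) (colList n lam F)

/-! ### Statistics on fillings of the plain shape `λ` (for Proposition 2.2) -/

/-- The descent statistic of a filling of the Young diagram of `λ`, whose
columns are listed from left to right. -/
def desTau (cols : List (List ℤ)) : ℕ :=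
  adjSumN (fun L R => ((Finset.range L.length).filter
    (fun r => slt (R.getD r 0) (L.getD r 0))).card) cols

/-- The complementary inversion statistic `cinv = n(λ) - inv` of a filling of
the Young diagram of `λ` (columns listed from left to right, `C_k` being the
`k`-th column from the right). -/
def cinvTau (cols : List (List ℤ)) : ℕ :=
  ∑ q ∈ Finset.range cols.length,
    (((Finset.range (cols.getD q []).length) ×ˢ (Finset.range (cols.getD q []).length)).filter
      (fun pp => pp.1 < pp.2 ∧
        (((1 ≤ q ∧ pp.2 < (cols.getD (q - 1) []).length) ∧
            slt ((cols.getD q []).getD pp.2 0) ((cols.getD q []).getD pp.1 0) ∧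
            slt ((cols.getD q []).getD pp.1 0) ((cols.getD (q - 1) []).getD pp.2 0)) ∨
          (¬ (1 ≤ q ∧ pp.2 < (cols.getD (q - 1) []).length) ∧
            slt ((cols.getD q []).getD pp.2 0) ((cols.getD q []).getD pp.1 0))))).card

/-! ### Chains for the root systems `C_n` and `B_n` and the conditions (R1), (R2) -/

def isPosRootC (n : ℕ) (β : ℕ × ℤ) : Prop :=
  (1 ≤ β.1 ∧ (β.1 : ℤ) < β.2 ∧ β.2 ≤ (n : ℤ)) ∨
  (1 ≤ β.1 ∧ 0 < -β.2 ∧ (β.1 : ℤ) ≤ -β.2 ∧ -β.2 ≤ (n : ℤ))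

/-- Positive roots of `B_n` use the same symbols; `(i,-i)` encodes `ε_i`. -/
def isPosRootB (n : ℕ) (β : ℕ × ℤ) : Prop := isPosRootC n β

/-- The root of type `B_n` of a symbol: as in type `C` except `(i,-i) ↦ ε_i`. -/
def rootVecB (n : ℕ) (β : ℕ × ℤ) : Fin n → ℤ :=
  if β.2 = -(β.1 : ℤ) then (fun r => if ((r : ℕ) + 1 : ℤ) = (β.1 : ℤ) then 1 else 0)
  else rootVec n β

/-- The coroot of type `B_n`: `ε_i^∨ = 2ε_i`, long roots unchanged. -/
def corootVecB (n : ℕ) (β : ℕ × ℤ) : Fin n → ℤ :=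
  if β.2 = -(β.1 : ℤ) then (fun r => if ((r : ℕ) + 1 : ℤ) = (β.1 : ℤ) then 2 else 0)
  else rootVec n β

/-- `ω_k` in type `C_n`. -/
def omegaC (n k : ℕ) : Fin n → ℤ := fun r => if (r : ℕ) + 1 ≤ k then 1 else 0

/-- `ω_k` in type `B_n` (`ω_n` is half the sum of the `ε_i`). -/
def omegaB (n k : ℕ) : Fin n → ℚ :=
  if k = n then (fun _ => 1/2) else (fun r => if (r : ℕ) + 1 ≤ k then 1 else 0)

/-- type `B`: `Γ'_j = ((1,-j),...,(j-1,-j),(j))`. -/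
def gammaPrimeB (j : ℕ) : List (ℕ × ℤ) := gammaPrime j ++ [(j, -(j : ℤ))]

/-- type `B`: `Γ(k) = Γ'_1 ⋯ Γ'_k Γ_1(k) ⋯ Γ_k(k)` for `k < n`, and
`Γ(n) = Γ'_1 ⋯ Γ'_n`. -/
def gammaChainB (n k : ℕ) : List (ℕ × ℤ) :=
  ((List.range k).map (fun r => gammaPrimeB (r + 1))).flatten
    ++ (if k = n then [] else ((List.range k).map (fun r => gammaJK n (r + 1) k)).flatten)

/-- `(R2)`: the subsequence of all occurrences of `α, β, γ` is a concatenation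
of consecutive pairs `(γ, α)` or `(γ, β)`. -/
def altPairs (g a b : ℕ × ℤ) : List (ℕ × ℤ) → Prop
  | [] => True
  | [_] => False
  | x :: y :: rest => x = g ∧ (y = a ∨ y = b) ∧ altPairs g a b rest

/-! ### Real vector space versions (for hyperplanes) -/

def ipR (n : ℕ) (u v : Fin n → ℝ) : ℝ := ∑ r, u r * v r

def affReflR (n : ℕ) (β : ℕ × ℤ) (c : ℝ) (v : Fin n → ℝ) : Fin n → ℝ :=
  fun r => v r - (ipR n v (fun s => ((corootVec n β s : ℤ) : ℝ)) - c) *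
    ((rootVec n β r : ℤ) : ℝ)

def wActR (n : ℕ) (w : List ℤ) (v : Fin n → ℝ) : Fin n → ℝ := fun r =>
  ∑ i : Fin n, ((if w.getD i 0 = ((r : ℕ) + 1 : ℤ) then v i else 0) +
    (if w.getD i 0 = -(((r : ℕ) + 1 : ℤ)) then -(v i) else 0))

/-- `γ^∨ = (2/⟨γ,γ⟩) γ`. -/
noncomputable def corootOfR (n : ℕ) (v : Fin n → ℝ) : Fin n → ℝ :=
  fun r => (2 / ipR n v v) * v r

/-- The part of the compressed filling of shape `2λ` consisting of the columns
numbered `2λ_1, 2λ_1 - 1, ..., q` (`\barσ[q]`); column `2i` is `C'_{i,2}` and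
column `2i-1` is `C_{i,1}`. -/
def compColsGe (n : ℕ) (lam : Fin n → ℕ) (F : Filling) (q : ℕ) : List (List ℤ) :=
  ((List.range (lamOne n lam)).map (fun t =>
    (if q ≤ 2 * (lamOne n lam - t) then
      [(if 2 ≤ conj n lam (lamOne n lam - t) then F.Cp (lamOne n lam - t) 2
        else F.Cu (lamOne n lam - t) 1)] else []) ++
    (if q ≤ 2 * (lamOne n lam - t) - 1 then [F.Cu (lamOne n lam - t) 1] else []))).flatten

/-! ### The chains `Δ` and `Φ` of Section 6 -/

/-- `Δ = ((1,p+1),...,(1,n),(1,-1),(1,-n),(1,-(n-1)),...,(1,-(p+1)))`. -/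
def deltaChain (n p : ℕ) : List (ℕ × ℤ) :=
  (List.range (n - p)).map (fun r => (1, ((p + 1 + r : ℕ) : ℤ)))
    ++ [(1, (-1 : ℤ))]
    ++ (List.range (n - p)).map (fun r => (1, -((n - r : ℕ) : ℤ)))

/-- The suffix `Δ_{\bar s}` of `Δ` beginning with `(1,-s)`. -/
def deltaSuffixNeg (p s : ℕ) : List (ℕ × ℤ) :=
  (List.range (s - p)).map (fun r => (1, -((s - r : ℕ) : ℤ)))

/-- The suffix `Δ_{\bar 1}` of `Δ` beginning with `(1,-1)`. -/
def deltaSuffixBar1 (n p : ℕ) : List (ℕ × ℤ) :=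
  [(1, (-1 : ℤ))] ++ (List.range (n - p)).map (fun r => (1, -((n - r : ℕ) : ℤ)))

/-- The suffix `Δ_s` of `Δ` beginning with `(1,s)` (for `p < s ≤ n`). -/
def deltaSuffixPos (n p s : ℕ) : List (ℕ × ℤ) :=
  (List.range (n + 1 - s)).map (fun r => (1, ((s + r : ℕ) : ℤ)))
    ++ [(1, (-1 : ℤ))]
    ++ (List.range (n - p)).map (fun r => (1, -((n - r : ℕ) : ℤ)))

/-- `Φ = ((1,-1),(1,-2),(2,-2),...,(1,-n),...,(n-1,-n),(n,-n))`. -/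
def phiChain (n : ℕ) : List (ℕ × ℤ) :=
  ((List.range n).map (fun jm =>
    (List.range (jm + 1)).map (fun im => (im + 1, -((jm + 1 : ℕ) : ℤ))))).flatten

/-- The suffix `Φ_{ij}` of `Φ` beginning with `(i,-j)`. -/
def phiSuffix (n i j : ℕ) : List (ℕ × ℤ) := (phiChain n).drop ((j - 1) * j / 2 + (i - 1))

/-- `ℓ^{ij}_-(w) = #{(k,l) : k ≤ l, (k,-l)` strictly precedes `(i,-j)` in `Φ`,
`w(k) ≻ -w(l)}`. -/
def lminusBefore (w : List ℤ) (i j : ℕ) : ℕ :=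
  (((Finset.range w.length) ×ˢ (Finset.range w.length)).filter
    (fun p => p.1 ≤ p.2 ∧ (p.2 + 1 < j ∨ (p.2 + 1 = j ∧ p.1 + 1 < i)) ∧
      slt (-(w.getD p.2 0)) (w.getD p.1 0))).card

/-! ### Indicators and the length function -/

/-- The indicator of `x ≺ y`, as an integer. -/
def ind (x y : ℤ) : ℤ := if slt x y then 1 else 0

/-- Contribution to the length of a pair of positions `k < l` with `w(k) = x`, `w(l) = z`. -/
def pairC (x z : ℤ) : ℤ := ind z x + ind (-z) x

lemma slt_trichotomy {x y : ℤ} (hx : x ≠ 0) (hy : y ≠ 0) (h : x ≠ y) :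
    (slt x y ∧ ¬ slt y x) ∨ (slt y x ∧ ¬ slt x y) := by
  unfold slt; omega

lemma slt_trans {x y z : ℤ} (h : slt x y) (h' : slt y z) : slt x z := by
  unfold slt at *; omega

lemma ind_swap {x y : ℤ} (hx : x ≠ 0) (hy : y ≠ 0) (h : x ≠ y) : ind y x = 1 - ind x y := by
  rcases slt_trichotomy hx hy h with ⟨h1, h2⟩ | ⟨h1, h2⟩ <;> simp [ind, h1, h2]

lemma ind_neg_neg (x y : ℤ) : ind (-x) (-y) = ind y x := by
  have : slt (-x) (-y) ↔ slt y x := by unfold slt; omega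
  simp [ind, this]

/-- The diagonal contribution of an entry to the length records its sign. -/
lemma ind_neg_self (x : ℤ) : ind (-x) x = if x < 0 then 1 else 0 := by
  have : slt (-x) x ↔ x < 0 := by unfold slt; omega
  simp [ind, this]

lemma ind_self_neg (x : ℤ) : ind x (-x) = if 0 < x then 1 else 0 := by
  have : slt x (-x) ↔ 0 < x := by unfold slt; omega
  simp [ind, this]

lemma ind_neg_left (x y : ℤ) : ind (-x) y = ind (-y) x := by
  have := ind_neg_neg x (-y)
  rwa [neg_neg] at this

lemma between_eq {x y z : ℤ} (h : slt x y) (hz : z ≠ 0) (hzx : z ≠ x) :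
    (if slt x z ∧ slt z y then (1 : ℤ) else 0) = ind z y - ind z x := by
  have hx : x ≠ 0 := by unfold slt at h; omega
  rcases slt_trichotomy hz hx hzx with ⟨h1, h2⟩ | ⟨h1, h2⟩
  · simp [ind, h1, h2, slt_trans h1 h]
  · simp [ind, h1, h2]

lemma Nab_cons (a b z : ℤ) (l : List ℤ) :
    Nab a b (z :: l) = (if slt a z ∧ slt z b then 1 else 0) + Nab a b l := by
  unfold Nab
  by_cases h : slt a z ∧ slt z b
  · simp [h]; omega
  · simp [h]

lemma Nab_nil (a b : ℤ) : Nab a b [] = 0 := rfl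

lemma Nab_append (a b : ℤ) (l m : List ℤ) : Nab a b (l ++ m) = Nab a b l + Nab a b m := by
  simp [Nab]

lemma sum_range_getD (f : ℤ → ℕ) (l : List ℤ) :
    ∑ k ∈ Finset.range l.length, f (l.getD k 0) = (l.map f).sum := by
  induction l with
  | nil => simp
  | cons x l ih => simp [Finset.sum_range_succ', ← ih, add_comm]

lemma lplus_cons (x : ℤ) (l : List ℤ) :
    lplus (x :: l) = (l.map (fun z => if slt z x then 1 else 0)).sum + lplus l := by
  unfold lplus
  rw [← sum_range_getD]
  simp only [Finset.card_filter, Finset.sum_product, List.length_cons, Finset.sum_range_succ']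
  simp [add_comm]

lemma lminus_cons (x : ℤ) (l : List ℤ) :
    lminus (x :: l) = (if slt (-x) x then 1 else 0) +
      (l.map (fun z => if slt (-z) x then 1 else 0)).sum + lminus l := by
  unfold lminus
  rw [← sum_range_getD (fun z => if slt (-z) x then 1 else 0)]
  simp only [Finset.card_filter, Finset.sum_product, List.length_cons, Finset.sum_range_succ']
  simp
  omega

lemma len_cons (x : ℤ) (l : List ℤ) :
    (len (x :: l) : ℤ) = ind (-x) x + (l.map (pairC x)).sum + len l := by
  have h : (l.map (pairC x)).sum = (((l.map (fun z => if slt z x then 1 else 0)).sum : ℕ) : ℤ) +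
      (((l.map (fun z => if slt (-z) x then 1 else 0)).sum : ℕ) : ℤ) := by
    induction l with
    | nil => simp
    | cons y l ih =>
      simp only [List.map_cons, List.sum_cons, ih, pairC, ind]
      push_cast
      ring
  rw [h]
  unfold len ind
  rw [lplus_cons, lminus_cons]
  push_cast
  ring

/-- The length of a word in terms of the word with one letter `y` deleted. -/
lemma len_insert (A B : List ℤ) (y : ℤ) :
    (len (A ++ y :: B) : ℤ) = len (A ++ B) + ind (-y) y + (A.map (fun z => pairC z y)).sum +
      (B.map (pairC y)).sum := by
  induction A with
  | nil => simp [len_cons]; ring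
  | cons x A ih =>
    simp only [List.cons_append, len_cons, ih, List.map_append, List.map_cons, List.sum_append,
      List.sum_cons]
    ring

/-- A word of nonzero integers with pairwise distinct absolute values. -/
def Good (l : List ℤ) : Prop := (∀ a ∈ l, a ≠ 0) ∧ (l.map Int.natAbs).Nodup

lemma Good.facts {x y : ℤ} {A B : List ℤ} (h : Good (x :: (A ++ y :: B))) :
    (x ≠ 0 ∧ y ≠ 0 ∧ x ≠ y ∧ x ≠ -y) ∧
      (∀ z ∈ A, z ≠ 0 ∧ z ≠ x ∧ z ≠ -x ∧ z ≠ y ∧ z ≠ -y) ∧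
      (∀ z ∈ B, z ≠ 0 ∧ z ≠ x ∧ z ≠ -x ∧ z ≠ y ∧ z ≠ -y) := by
  obtain ⟨h0, h1⟩ := h
  have h2 : ((x :: y :: (A ++ B)).map Int.natAbs).Nodup := by
    refine (List.Perm.nodup_iff (List.Perm.map _ ?_)).1 h1
    exact List.Perm.cons _ List.perm_middle
  have key : ∀ z ∈ A ++ B, z ≠ 0 ∧ z ≠ x ∧ z ≠ -x ∧ z ≠ y ∧ z ≠ -y := by
    intro z hz
    simp only [List.map_cons, List.nodup_cons, List.mem_cons, List.mem_map, not_or] at h2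
    have hx : ¬ z.natAbs = x.natAbs := fun e => h2.1.2 ⟨z, hz, e⟩
    have hy : ¬ z.natAbs = y.natAbs := fun e => h2.2.1 ⟨z, hz, e⟩
    have : z ≠ 0 := h0 z (by simp at hz ⊢; tauto)
    omega
  refine ⟨?_, fun z hz => key z (by simp [hz]), fun z hz => key z (by simp [hz])⟩
  have hx0 := h0 x (by simp)
  have hy0 := h0 y (by simp)
  simp only [List.map_cons, List.nodup_cons, List.mem_cons, not_or] at h2
  have := h2.1.1
  omega

lemma Good.swap {x y : ℤ} {A B : List ℤ} (h : Good (x :: (A ++ y :: B))) :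
    Good (y :: (A ++ x :: B)) := by
  have hp : (y :: (A ++ x :: B)).Perm (x :: (A ++ y :: B)) :=
    (List.Perm.cons y List.perm_middle).trans
      ((List.Perm.swap x y _).trans (List.Perm.cons x List.perm_middle.symm))
  exact ⟨fun a ha => h.1 a (hp.mem_iff.1 ha), (hp.map _).nodup_iff.2 h.2⟩

lemma Good.negAt {x : ℤ} {A B : List ℤ} (h : Good (A ++ x :: B)) : Good (A ++ (-x) :: B) := by
  refine ⟨fun a ha => ?_, by simpa using h.2⟩
  simp only [List.mem_append, List.mem_cons] at ha
  rcases ha with ha | rfl | ha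
  · exact h.1 a (by simp [ha])
  · simpa using h.1 x (by simp)
  · exact h.1 a (by simp [ha])

lemma Good.swapNeg {x y : ℤ} {A B : List ℤ} (h : Good (x :: (A ++ y :: B))) :
    Good ((-y) :: (A ++ (-x) :: B)) :=
  Good.negAt (A := (-y) :: A) (Good.negAt (A := []) h.swap)

lemma sum_between {x y : ℤ} (hxy : slt x y) (f : ℤ → ℤ) (A : List ℤ)
    (hf : ∀ z ∈ A, f z = 2 * (ind z y - ind z x)) (hA : ∀ z ∈ A, z ≠ 0 ∧ z ≠ x) :
    (A.map f).sum = 2 * (Nab x y A : ℤ) := by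
  induction A with
  | nil => simp [Nab]
  | cons z A ih =>
    have hz := hA z (by simp)
    have := between_eq hxy hz.1 hz.2
    rw [List.map_cons, List.sum_cons, hf z (by simp), ← this, Nab_cons,
      ih (fun u hu => hf u (by simp [hu])) (fun u hu => hA u (by simp [hu]))]
    push_cast
    ring

/-- Length change under `(1,j)`, where `A` is the word between positions `1` and `j`: only the
letters of `A` strictly between `x` and `y` contribute, twice each. -/
lemma len_swap {x y : ℤ} {A B : List ℤ} (h : Good (x :: (A ++ y :: B))) (hxy : slt x y) :
    len (y :: (A ++ x :: B)) = len (x :: (A ++ y :: B)) + 1 + 2 * Nab x y A := by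
  obtain ⟨⟨hx, hy, h1, h2⟩, hA, hB⟩ := h.facts
  have key := sum_between hxy
    (fun z => pairC y z + pairC z x - pairC x z - pairC z y) A (by
      intro z hz
      obtain ⟨a1, a2, a3, a4, a5⟩ := hA z hz
      simp only [pairC]
      rw [ind_swap a1 hx a2, ind_swap a1 hy a4, ind_neg_left x z, ind_neg_left y z]
      ring) (fun z hz => ⟨(hA z hz).1, (hA z hz).2.1⟩)
  have e : (A.map (fun z => pairC y z + pairC z x - pairC x z - pairC z y)).sum =
      (A.map (pairC y)).sum + (A.map (fun z => pairC z x)).sum - (A.map (pairC x)).sum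
        - (A.map (fun z => pairC z y)).sum := by
    clear key hA h
    induction A with
    | nil => simp
    | cons z A ih => simp only [List.map_cons, List.sum_cons, ih]; ring
  rw [e] at key
  have hp : pairC y x - pairC x y = 1 := by
    simp only [pairC]
    rw [ind_swap hx hy h1, ind_neg_left x y]
    have : ind x y = 1 := by simp [ind, hxy]
    rw [this]; ring
  zify
  simp only [len_cons, len_insert, List.map_append, List.map_cons, List.sum_append, List.sum_cons]
  linarith

/-- Length change under `(1,-j)`, which replaces the first entry `x` by `y`, the negative of the
entry in position `j`. Letters after position `j` count with both signs. -/
lemma len_swapNeg {x y : ℤ} {A B : List ℤ} (h : Good (x :: (A ++ (-y) :: B))) (hxy : slt x y) :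
    len (y :: (A ++ (-x) :: B)) = len (x :: (A ++ (-y) :: B)) + 1 + 2 * (Nab x y A + Nab x y B +
      Nab x y (B.map Neg.neg) + if 0 < x ∧ y < 0 then 1 else 0) := by
  obtain ⟨⟨hx, hy, h1, h2⟩, hA, hB⟩ := h.facts
  have key := sum_between hxy
    (fun z => pairC y z + pairC z (-x) - pairC x z - pairC z (-y)) A (by
      intro z hz
      obtain ⟨a1, a2, a3, a4, a5⟩ := hA z hz
      simp only [pairC, neg_neg]
      rw [neg_neg] at a5
      rw [ind_swap a1 hx a2, ind_swap (x := z) (y := y) a1 (by omega) a5, ind_neg_left x z, ind_neg_left y z]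
      ring) (fun z hz => ⟨(hA z hz).1, (hA z hz).2.1⟩)
  have e : (A.map (fun z => pairC y z + pairC z (-x) - pairC x z - pairC z (-y))).sum =
      (A.map (pairC y)).sum + (A.map (fun z => pairC z (-x))).sum - (A.map (pairC x)).sum
        - (A.map (fun z => pairC z (-y))).sum := by
    clear key hA h
    induction A with
    | nil => simp
    | cons z A ih => simp only [List.map_cons, List.sum_cons, ih]; ring
  rw [e] at key
  have k1 := sum_between hxy (fun z => 2 * (ind z y - ind z x)) B (fun _ _ => rfl)
    (fun z hz => ⟨(hB z hz).1, (hB z hz).2.1⟩)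
  have k2 := sum_between hxy (fun z => 2 * (ind z y - ind z x)) (B.map Neg.neg) (fun _ _ => rfl)
    (by
      intro z hz
      obtain ⟨u, hu, rfl⟩ := List.mem_map.1 hz
      obtain ⟨a1, a2, a3, a4, a5⟩ := hB u hu
      constructor <;> omega)
  have e2 : (B.map (pairC y)).sum + (B.map (pairC (-x))).sum - (B.map (pairC x)).sum
        - (B.map (pairC (-y))).sum = (B.map (fun z => 2 * (ind z y - ind z x))).sum +
        ((B.map Neg.neg).map (fun z => 2 * (ind z y - ind z x))).sum := by
    clear k1 k2 key e hA h
    induction B with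
    | nil => simp
    | cons z B ih =>
      have := ih (fun u hu => hB u (by simp [hu]))
      obtain ⟨a1, a2, a3, a4, a5⟩ := hB z (by simp)
      rw [neg_neg] at a5
      have hz : pairC y z + pairC (-x) z - pairC x z - pairC (-y) z =
          2 * (ind z y - ind z x) + 2 * (ind (-z) y - ind (-z) x) := by
        simp only [pairC, ind_neg_neg]
        rw [← ind_neg_neg (-x) z, neg_neg, ← ind_neg_neg (-y) z, neg_neg]
        rw [ind_swap a1 hx a2, ind_swap a1 (by omega) a5,
          ind_swap (x := -z) (y := x) (by omega) hx (by omega),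
          ind_swap (x := -z) (y := y) (by omega) (by omega) (by omega)]
        ring
      simp only [List.map_cons, List.sum_cons]
      linarith
  have hp : pairC y (-x) - pairC x (-y) + ind (-y) y + ind x (-x) - ind (-x) x - ind y (-y) =
      1 + 2 * (if 0 < x ∧ y < 0 then 1 else 0) := by
    simp only [pairC, neg_neg]
    have : ind x y = 1 := by simp [ind, hxy]
    rw [ind_neg_left x y]
    rw [this, ind_swap hx (by omega) (by omega : x ≠ y), this]
    rw [ind_neg_self x, ind_neg_self y, ind_self_neg x, ind_self_neg y]
    clear key e k1 k2 e2 hA hB h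
    unfold slt at hxy
    split_ifs <;> omega
  zify
  simp only [len_cons, len_insert, List.map_append, List.map_cons, List.sum_append, List.sum_cons,
    neg_neg]
  linarith

/-- Length change under `(1,-1)`. -/
lemma len_negFirst {x : ℤ} {A : List ℤ} (h : Good (x :: A)) (hx : 0 < x) :
    len ((-x) :: A) = len (x :: A) + 1 + 2 * Nab x (-x) A := by
  have hxy : slt x (-x) := by unfold slt; omega
  have hA : ∀ z ∈ A, z ≠ 0 ∧ z ≠ x ∧ z ≠ -x := by
    intro z hz
    obtain ⟨h0, h1⟩ := h
    have := h0 z (by simp [hz])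
    simp only [List.map_cons, List.nodup_cons, List.mem_map] at h1
    have hx : ¬ z.natAbs = x.natAbs := fun e => h1.1 ⟨z, hz, e⟩
    omega
  have key := sum_between hxy (fun z => pairC (-x) z - pairC x z) A (by
      intro z hz
      obtain ⟨a1, a2, a3⟩ := hA z hz
      simp only [pairC, ind_neg_neg]
      rw [ind_swap a1 hx.ne' a2, ind_neg_left z x,
        ind_swap (x := z) (y := -x) a1 (by omega) (by omega)]
      ring) (fun z hz => ⟨(hA z hz).1, (hA z hz).2.1⟩)
  have e : (A.map (fun z => pairC (-x) z - pairC x z)).sum =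
      (A.map (pairC (-x))).sum - (A.map (pairC x)).sum := by
    clear key hA h
    induction A with
    | nil => simp
    | cons z A ih => simp only [List.map_cons, List.sum_cons, ih]; ring
  have h1 : ind x (-x) = 1 := by simp [ind, hxy]
  have h2 : ind (-x) x = 0 := by unfold ind slt; split_ifs <;> omega
  rw [e] at key
  zify
  simp only [len_cons, neg_neg, h1, h2]
  linarith

/-! ### Reflections acting on windows -/

open Polynomial

lemma applyRefl_pos (x y : ℤ) (A B : List ℤ) {j : ℕ} (hj : j = A.length + 2) :
    applyRefl (x :: (A ++ y :: B)) (1, (j : ℤ)) = y :: (A ++ x :: B) := by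
  subst hj
  have h0 : (0 : ℤ) < ((A.length + 2 : ℕ) : ℤ) := by omega
  have h1 : (((A.length + 2 : ℕ) : ℤ)).toNat - 1 = A.length + 1 := by omega
  simp only [applyRefl, h0, if_true, h1]
  simp

lemma applyRefl_neg (x y : ℤ) (A B : List ℤ) {j : ℕ} (hj : j = A.length + 2) :
    applyRefl (x :: (A ++ y :: B)) (1, -(j : ℤ)) = (-y) :: (A ++ (-x) :: B) := by
  subst hj
  have h0 : ¬ (0 : ℤ) < -((A.length + 2 : ℕ) : ℤ) := by omega
  have h1 : (- -((A.length + 2 : ℕ) : ℤ)).toNat - 1 = A.length + 1 := by omega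
  have h2 : ¬ 1 = (- -((A.length + 2 : ℕ) : ℤ)).toNat := by omega
  simp only [applyRefl, h0, if_false, h1, h2]
  simp

lemma applyRefl_bar (x : ℤ) (A : List ℤ) :
    applyRefl (x :: A) (1, (-1 : ℤ)) = (-x) :: A := by
  simp [applyRefl]

/-- Reflections `(1,j)`, `(1,-j)` with `2 ≤ j ≤ n`, and `(1,-1)`. -/
def IsFirstRefl (n : ℕ) (t : ℕ × ℤ) : Prop :=
  t = (1, -1) ∨ ∃ j : ℕ, 2 ≤ j ∧ j ≤ n ∧ (t = (1, (j : ℤ)) ∨ t = (1, -(j : ℤ)))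

lemma exists_split {n j : ℕ} {w : List ℤ} (hw : w.length = n) (h2 : 2 ≤ j) (hj : j ≤ n) :
    ∃ x A y B, w = x :: (A ++ y :: B) ∧ j = A.length + 2 := by
  cases w with
  | nil => simp at hw; omega
  | cons x l =>
    simp only [List.length_cons] at hw
    have hlt : j - 2 < l.length := by omega
    refine ⟨x, l.take (j - 2), l[j - 2], l.drop (j - 2 + 1), ?_, ?_⟩
    · simp
    · simp; omega

/-- A reflection of the first position keeps windows good and changes the length by an odd
number. -/
lemma refl_step {n : ℕ} {w : List ℤ} {t : ℕ × ℤ} (hw : w.length = n) (hn : 1 ≤ n) (hg : Good w)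
    (ht : IsFirstRefl n t) : Good (applyRefl w t) ∧ (applyRefl w t).length = n ∧
      ((∃ N, len (applyRefl w t) = len w + 1 + 2 * N) ∨
        (∃ N, len w = len (applyRefl w t) + 1 + 2 * N)) := by
  rcases ht with rfl | ⟨j, h2, hj, rfl | rfl⟩
  · cases w with
    | nil => simp at hw; omega
    | cons x A =>
      rw [applyRefl_bar]
      have hg' : Good ((-x) :: A) := Good.negAt (A := []) hg
      refine ⟨hg', by simpa using hw, ?_⟩
      have hx : x ≠ 0 := hg.1 x (by simp)
      rcases lt_or_gt_of_ne hx with h | h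
      · right
        have := len_negFirst hg' (by omega)
        rw [neg_neg] at this
        exact ⟨_, this⟩
      · left
        exact ⟨_, len_negFirst hg h⟩
  · obtain ⟨x, A, y, B, rfl, hA⟩ := exists_split hw h2 hj
    rw [applyRefl_pos _ _ _ _ hA]
    refine ⟨hg.swap, by simpa using hw, ?_⟩
    obtain ⟨⟨hx, hy, h1, h2⟩, -⟩ := hg.facts
    rcases slt_trichotomy hx hy h1 with h | h
    · exact Or.inl ⟨_, len_swap hg h.1⟩
    · exact Or.inr ⟨_, len_swap hg.swap h.1⟩
  · obtain ⟨x, A, y, B, rfl, hA⟩ := exists_split hw h2 hj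
    rw [applyRefl_neg _ _ _ _ hA]
    refine ⟨hg.swapNeg, by simpa using hw, ?_⟩
    obtain ⟨⟨hx, hy, h1, h2⟩, -⟩ := hg.facts
    obtain ⟨y, rfl⟩ : ∃ z, y = -z := ⟨-y, by simp⟩
    have hg' := hg.swapNeg
    rw [neg_neg] at hg' h2 ⊢
    rcases slt_trichotomy hx (by omega) h2 with h | h
    · exact Or.inl ⟨_, len_swapNeg hg h.1⟩
    · exact Or.inr ⟨_, len_swapNeg hg' h.1⟩

/-! ### The sum over subsequences as a recursion on the chain -/

/-- The sum of `h T` over all subsequences `T` of `D` (indexed by their position sets). -/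
noncomputable def subSum : List (ℕ × ℤ) → (List (ℕ × ℤ) → ℤ[X]) → ℤ[X]
  | [], h => h []
  | t :: D, h => subSum D h + subSum D (fun T => h (t :: T))

lemma subSum_snoc (D : List (ℕ × ℤ)) (t : ℕ × ℤ) (h : List (ℕ × ℤ) → ℤ[X]) :
    subSum (D ++ [t]) h = subSum D h + subSum D (fun T => h (T ++ [t])) := by
  induction D generalizing h with
  | nil => simp [subSum]
  | cons u D ih =>
    simp only [List.cons_append, subSum, ih]
    ring

lemma sort_eq_filter {k : ℕ} {J : Finset ℕ} (hJ : J ⊆ Finset.range k) :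
    J.sort (· ≤ ·) = (List.range k).filter (· ∈ J) := by
  have hl : ((List.range k).filter (· ∈ J)).toFinset = J := by
    ext a
    simp only [List.mem_toFinset, List.mem_filter, List.mem_range, decide_eq_true_eq]
    exact ⟨fun h => h.2, fun h => ⟨Finset.mem_range.1 (hJ h), h⟩⟩
  conv_lhs => rw [← hl]
  refine (List.toFinset_sort (· ≤ ·) (List.nodup_range.filter _)).2 ?_
  exact (List.pairwise_le_range).filter _

lemma selChain_snoc {D : List (ℕ × ℤ)} (t : ℕ × ℤ) {J : Finset ℕ}
    (hJ : J ⊆ Finset.range D.length) : selChain (D ++ [t]) J = selChain D J := by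
  unfold selChain
  refine List.map_congr_left fun j hj => ?_
  have : j < D.length := Finset.mem_range.1 (hJ (by simpa using hj))
  exact List.getD_append _ _ _ _ this

lemma selChain_snoc_insert {D : List (ℕ × ℤ)} (t : ℕ × ℤ) {J : Finset ℕ}
    (hJ : J ⊆ Finset.range D.length) :
    selChain (D ++ [t]) (insert D.length J) = selChain D J ++ [t] := by
  have h1 : (insert D.length J) ⊆ Finset.range (D.length + 1) := by
    rw [Finset.range_add_one]
    exact Finset.insert_subset_insert _ hJ
  have h2 : (insert D.length J).sort (· ≤ ·) = J.sort (· ≤ ·) ++ [D.length] := by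
    rw [sort_eq_filter h1, sort_eq_filter hJ, List.range_succ, List.filter_append]
    congr 1
    · refine List.filter_congr fun a ha => ?_
      have : a ≠ D.length := by have := List.mem_range.1 ha; omega
      simp [this]
    · simp
  have h3 := selChain_snoc t hJ
  unfold selChain at *
  rw [h2, List.map_append, h3]
  simp [List.getD]

lemma sum_powerset_selChain (D : List (ℕ × ℤ)) (h : List (ℕ × ℤ) → ℤ[X]) :
    ∑ J ∈ (Finset.range D.length).powerset, h (selChain D J) = subSum D h := by
  induction D using List.reverseRecOn generalizing h with
  | nil => simp [subSum, selChain]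
  | append_singleton D t ih =>
    rw [subSum_snoc, ← ih, ← ih, List.length_append, List.length_singleton, Finset.range_add_one,
      Finset.sum_powerset_insert (by simp)]
    congr 1
    · exact Finset.sum_congr rfl fun J hJ => by
        rw [selChain_snoc t (Finset.mem_powerset.1 hJ)]
    · exact Finset.sum_congr rfl fun J hJ => by
        rw [selChain_snoc_insert t (Finset.mem_powerset.1 hJ)]

/-- The weight of a subsequence `T`: `t^{(l(wT)-l(w)-|T|)/2} (1-t)^{|T|}` if `T` is
increasing-admissible with `(wT)(1) = b`, and `0` otherwise. -/
noncomputable def weight (b : ℤ) (w : List ℤ) (T : List (ℕ × ℤ)) : ℤ[X] :=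
  if incChain w T = true ∧ (applyAll w T).getD 0 0 = b then
    X ^ ((len (applyAll w T) - len w - T.length) / 2) * (1 - X) ^ T.length else 0

/-- The weighted sum over subsequences of a chain, by recursion on the first reflection being
skipped or taken. -/
noncomputable def chainSum (b : ℤ) : List (ℕ × ℤ) → List ℤ → ℤ[X]
  | [], w => if w.getD 0 0 = b then 1 else 0
  | t :: D, w => chainSum b D w + if len w < len (applyRefl w t) then
      X ^ ((len (applyRefl w t) - len w - 1) / 2) * (1 - X) * chainSum b D (applyRefl w t) else 0

lemma incChain_len {n : ℕ} (hn : 1 ≤ n) (T : List (ℕ × ℤ)) (hT : ∀ t ∈ T, IsFirstRefl n t)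
    (w : List ℤ) (hw : w.length = n) (hg : Good w) (h : incChain w T = true) :
    len w + T.length ≤ len (applyAll w T) := by
  induction T generalizing w with
  | nil => simp [applyAll]
  | cons t T ih =>
    simp only [incChain, Bool.and_eq_true, decide_eq_true_eq] at h
    obtain ⟨g1, g2, -⟩ := refl_step hw hn hg (hT t (by simp))
    have := ih (fun u hu => hT u (by simp [hu])) _ g2 g1 h.2
    simp only [List.length_cons, applyAll, List.foldl_cons] at *
    omega

lemma weight_cons {n : ℕ} (hn : 1 ≤ n) (b : ℤ) (t : ℕ × ℤ) (T : List (ℕ × ℤ))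
    (hT : ∀ u ∈ t :: T, IsFirstRefl n u) (w : List ℤ) (hw : w.length = n) (hg : Good w) :
    weight b w (t :: T) = if len w < len (applyRefl w t) then
      X ^ ((len (applyRefl w t) - len w - 1) / 2) * (1 - X) * weight b (applyRefl w t) T
      else 0 := by
  obtain ⟨g1, g2, g3⟩ := refl_step hw hn hg (hT t (by simp))
  have hall : applyAll w (t :: T) = applyAll (applyRefl w t) T := rfl
  by_cases h : len w < len (applyRefl w t)
  · rw [if_pos h]
    unfold weight
    simp only [incChain, h, decide_true, Bool.true_and, hall]
    by_cases hc : incChain (applyRefl w t) T = true ∧ (applyAll (applyRefl w t) T).getD 0 0 = b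
    · rw [if_pos hc, if_pos hc]
      have hl := incChain_len hn T (fun u hu => hT u (by simp [hu])) _ g2 g1 hc.1
      obtain ⟨N, hN⟩ : ∃ N, len (applyRefl w t) = len w + 1 + 2 * N := by
        rcases g3 with g3 | ⟨N, g3⟩
        · exact g3
        · omega
      have e : (len (applyAll (applyRefl w t) T) - len w - (t :: T).length) / 2 =
          (len (applyRefl w t) - len w - 1) / 2 +
          (len (applyAll (applyRefl w t) T) - len (applyRefl w t) - T.length) / 2 := by
        simp only [List.length_cons]
        omega
      rw [e, pow_add, List.length_cons, pow_succ]
      ring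
    · rw [if_neg hc, if_neg hc, mul_zero]
  · rw [if_neg h]
    unfold weight
    simp [incChain, h]

lemma subSum_mul (c : ℤ[X]) (D : List (ℕ × ℤ)) (h : List (ℕ × ℤ) → ℤ[X]) :
    subSum D (fun T => c * h T) = c * subSum D h := by
  induction D generalizing h with
  | nil => rfl
  | cons t D ih => simp only [subSum, ih, mul_add]

lemma subSum_congr {D : List (ℕ × ℤ)} {h h' : List (ℕ × ℤ) → ℤ[X]}
    (H : ∀ T, (∀ t ∈ T, t ∈ D) → h T = h' T) : subSum D h = subSum D h' := by
  induction D generalizing h h' with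
  | nil => exact H [] (by simp)
  | cons t D ih =>
    simp only [subSum]
    rw [ih (fun T hT => H T fun u hu => List.mem_cons_of_mem _ (hT u hu)),
      ih (h := fun T => h (t :: T)) (h' := fun T => h' (t :: T)) (fun T hT => H _ (by
        intro u hu
        rcases List.mem_cons.1 hu with rfl | hu
        · simp
        · exact List.mem_cons_of_mem _ (hT u hu)))]

lemma subSum_weight {n : ℕ} (hn : 1 ≤ n) (b : ℤ) (D : List (ℕ × ℤ))
    (hD : ∀ u ∈ D, IsFirstRefl n u) (w : List ℤ) (hw : w.length = n) (hg : Good w) :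
    subSum D (weight b w) = chainSum b D w := by
  induction D generalizing w with
  | nil => simp [subSum, weight, chainSum, incChain, applyAll]
  | cons t D ih =>
    obtain ⟨g1, g2, -⟩ := refl_step hw hn hg (hD t (by simp))
    have hD' : ∀ u ∈ D, IsFirstRefl n u := fun u hu => hD u (by simp [hu])
    rw [subSum, chainSum, ih hD' w hw hg]
    congr 1
    rw [subSum_congr (h' := fun T => (if len w < len (applyRefl w t) then
      X ^ ((len (applyRefl w t) - len w - 1) / 2) * (1 - X) else 0) * weight b (applyRefl w t) T),
      subSum_mul, ih hD' _ g2 g1]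
    · split_ifs <;> simp
    · intro T hT
      rw [weight_cons hn b t T (fun u hu => ?_) w hw hg]
      · split_ifs <;> simp
      · rcases List.mem_cons.1 hu with rfl | hu
        · exact hD _ (by simp)
        · exact hD' u (hT u hu)

/-! ### Evaluation of the recursion -/

/-- One step of the recursion, once the sign and size of the length change are known. -/
lemma chainSum_step {b : ℤ} {t : ℕ × ℤ} {D : List (ℕ × ℤ)} {w w' : List ℤ} {P : Prop} [Decidable P]
    {N : ℕ} (hw : applyRefl w t = w') (h1 : P → len w' = len w + 1 + 2 * N)
    (h2 : ¬ P → len w' < len w) :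
    chainSum b (t :: D) w = chainSum b D w +
      if P then X ^ N * (1 - X) * chainSum b D w' else 0 := by
  rw [chainSum, hw]
  by_cases h : P
  · have := h1 h
    rw [if_pos h, if_pos (by omega), show (len w' - len w - 1) / 2 = N by omega]
  · have := h2 h
    rw [if_neg h, if_neg (by omega)]

lemma chainSum_pos {b x z : ℤ} {A B : List ℤ} {j : ℕ} (hj : j = A.length + 2)
    (hg : Good (x :: (A ++ z :: B))) (D : List (ℕ × ℤ)) :
    chainSum b ((1, (j : ℤ)) :: D) (x :: (A ++ z :: B)) = chainSum b D (x :: (A ++ z :: B)) +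
      if slt x z then X ^ (Nab x z A) * (1 - X) * chainSum b D (z :: (A ++ x :: B)) else 0 := by
  refine chainSum_step (applyRefl_pos _ _ _ _ hj) (fun h => len_swap hg h) fun h => ?_
  obtain ⟨⟨hx, hy, h1, -⟩, -⟩ := hg.facts
  have := len_swap hg.swap ((slt_trichotomy hx hy h1).resolve_left (fun h' => h h'.1)).1
  omega

lemma chainSum_neg {b x z : ℤ} {A B : List ℤ} {j : ℕ} (hj : j = A.length + 2)
    (hg : Good (x :: (A ++ (-z) :: B))) (D : List (ℕ × ℤ)) :
    chainSum b ((1, -(j : ℤ)) :: D) (x :: (A ++ (-z) :: B)) =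
      chainSum b D (x :: (A ++ (-z) :: B)) +
      if slt x z then X ^ (Nab x z A + Nab x z B + Nab x z (B.map Neg.neg) +
        if 0 < x ∧ z < 0 then 1 else 0) * (1 - X) * chainSum b D (z :: (A ++ (-x) :: B)) else 0 := by
  have hw := applyRefl_neg x (-z) A B hj
  have hg' := hg.swapNeg
  rw [neg_neg] at hw hg'
  refine chainSum_step hw (fun h => len_swapNeg hg h) fun h => ?_
  obtain ⟨⟨hx, hy, -, h1⟩, -⟩ := hg.facts
  rw [neg_neg] at h1
  have := len_swapNeg hg'
    ((slt_trichotomy hx (by omega) h1).resolve_left (fun h' => h h'.1)).1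
  omega

lemma chainSum_bar {b x : ℤ} {A : List ℤ} (hg : Good (x :: A)) (D : List (ℕ × ℤ)) :
    chainSum b ((1, (-1 : ℤ)) :: D) (x :: A) = chainSum b D (x :: A) +
      if slt x (-x) then X ^ (Nab x (-x) A) * (1 - X) * chainSum b D ((-x) :: A) else 0 := by
  refine chainSum_step (applyRefl_bar _ _) (fun h => len_negFirst hg ?_) fun h => ?_
  · unfold slt at h; omega
  · have hx : x ≠ 0 := hg.1 x (by simp)
    have hg' : Good ((-x) :: A) := Good.negAt (A := []) hg
    have := len_negFirst hg' (by unfold slt at h; omega)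
    rw [neg_neg] at this
    omega

lemma applyRefl_getD_of_ne {n k : ℕ} {t : ℕ × ℤ} (ht : IsFirstRefl n t) (hk : k ≠ 0)
    (hne : t.2.natAbs ≠ k + 1) (w : List ℤ) :
    (applyRefl w t).getD k 0 = w.getD k 0 := by
  have h1 : (0 : ℕ) ≠ k := hk.symm
  rcases ht with rfl | ⟨j, h2, hj, rfl | rfl⟩
  · simp [applyRefl, List.getD, h1]
  · simp only at hne
    have h2 : j - 1 ≠ k := by omega
    have h3 : 0 < j := by omega
    simp [applyRefl, List.getD, h1, h2, h3]
  · simp only at hne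
    have h2 : j - 1 ≠ k := by omega
    have h3 : ¬ 1 = j := by omega
    have h4 : ¬ (j : ℤ) < 0 := by omega
    simp [applyRefl, List.getD, h1, h2, h3, h4]

/-- If `±b` sits at a position (with index `k ≥ 1`) which the chain does not move, then `b` never
reaches the first position. -/
lemma chainSum_eq_zero {n k : ℕ} {b : ℤ} (hk : k ≠ 0) (hkn : k < n) (D : List (ℕ × ℤ))
    (hD : ∀ t ∈ D, IsFirstRefl n t ∧ t.2.natAbs ≠ k + 1) (w : List ℤ) (hw : w.length = n)
    (hg : Good w) (hb : (w.getD k 0).natAbs = b.natAbs) : chainSum b D w = 0 := by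
  induction D generalizing w with
  | nil =>
    obtain ⟨x, A, y, B, rfl, hA⟩ := exists_split (j := k + 1) hw (by omega) hkn
    obtain ⟨⟨-, -, h1, h2⟩, -⟩ := hg.facts
    obtain rfl : k = A.length + 1 := by omega
    simp only [List.getD_cons_succ] at hb
    rw [List.getD_append_right _ _ _ _ le_rfl] at hb
    simp only [Nat.sub_self, List.getD_cons_zero] at hb
    have : x ≠ b := by omega
    simp [chainSum, this]
  | cons t D ih =>
    obtain ⟨ht, hne⟩ := hD t (by simp)
    have hD' : ∀ t ∈ D, IsFirstRefl n t ∧ t.2.natAbs ≠ k + 1 := fun u hu => hD u (by simp [hu])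
    obtain ⟨g1, g2, -⟩ := refl_step hw (by omega) hg ht
    rw [chainSum, ih hD' w hw hg hb,
      ih hD' _ g2 g1 (by rw [applyRefl_getD_of_ne ht hk hne]; exact hb)]
    simp

lemma mem_deltaSuffixNeg {p m : ℕ} {t : ℕ × ℤ} (h : t ∈ deltaSuffixNeg p m) :
    ∃ j : ℕ, p + 1 ≤ j ∧ j ≤ m ∧ t = (1, -(j : ℤ)) := by
  unfold deltaSuffixNeg at h
  obtain ⟨r, hr, rfl⟩ := List.mem_map.1 h
  have := List.mem_range.1 hr
  exact ⟨m - r, by omega, by omega, rfl⟩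

lemma deltaSuffixNeg_succ {p m : ℕ} (h : p ≤ m) :
    deltaSuffixNeg p (m + 1) = (1, -((m + 1 : ℕ) : ℤ)) :: deltaSuffixNeg p m := by
  unfold deltaSuffixNeg
  rw [show m + 1 - p = (m - p) + 1 by omega, List.range_succ_eq_map]
  simp [Function.comp_def]

lemma deltaSuffixNeg_zero {p k n m : ℕ} {b : ℤ} (hp : 1 ≤ p) (hm : m ≤ k) (hkn : k < n)
    (hk : k ≠ 0) (w : List ℤ) (hw : w.length = n)
    (hg : Good w) (hb : (w.getD k 0).natAbs = b.natAbs) :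
    chainSum b (deltaSuffixNeg p m) w = 0 := by
  refine chainSum_eq_zero hk hkn _ (fun t ht => ?_) w hw hg hb
  obtain ⟨j, h1, h2, rfl⟩ := mem_deltaSuffixNeg ht
  refine ⟨Or.inr ⟨j, by omega, by omega, Or.inr rfl⟩, ?_⟩
  simp only
  omega

/-- Once the first entry is `b`, only the empty subsequence of the remaining negative chain
leaves it there. -/
lemma deltaSuffixNeg_one {p m n : ℕ} {b : ℤ} (hp : 1 ≤ p) (hm : m ≤ n) (l : List ℤ)
    (hw : (b :: l).length = n) (hg : Good (b :: l)) :
    chainSum b (deltaSuffixNeg p m) (b :: l) = 1 := by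
  induction m with
  | zero => simp [deltaSuffixNeg, chainSum]
  | succ m ih =>
    by_cases hpm : p ≤ m
    · rw [deltaSuffixNeg_succ hpm, chainSum, ih (by omega)]
      have ht : IsFirstRefl n (1, -((m + 1 : ℕ) : ℤ)) :=
        Or.inr ⟨m + 1, by omega, hm, Or.inr rfl⟩
      obtain ⟨g1, g2, -⟩ := refl_step hw (by omega) hg ht
      rw [deltaSuffixNeg_zero hp le_rfl hm (by omega) _ g2 g1]
      · simp
      · obtain ⟨x, A, y, B, e, hA⟩ := exists_split (j := m + 1) hw (by omega) hm
        obtain rfl : m = A.length + 1 := by omega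
        rw [e, applyRefl_neg _ _ _ _ hA]
        simp only [List.cons.injEq] at e
        simp [e.1]
    · rw [deltaSuffixNeg, show m + 1 - p = 0 by omega]
      simp [chainSum]

/-- The telescoping identity `t^{e+1} + t^e (1 - t) = t^e`, in the form in which it removes one
letter from the exponent. -/
lemma combine {x z b : ℤ} {e0 e1 e2 E : ℕ}
    (h1 : slt x z → slt z b → e0 = E + 1 ∧ e1 + e2 = E)
    (h2 : slt x b → ¬ (slt x z ∧ slt z b) → e0 = E) :
    ((if slt x b then X ^ e0 * (1 - X) else 0) +
      if slt x z then X ^ e1 * (1 - X) * (if slt z b then X ^ e2 * (1 - X) else 0) else 0 : ℤ[X]) =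
      if slt x b then X ^ E * (1 - X) else 0 := by
  by_cases hz : slt x z ∧ slt z b
  · obtain ⟨rfl, rfl⟩ := h1 hz.1 hz.2
    simp only [hz.1, hz.2, slt_trans hz.1 hz.2, if_true]
    ring
  · have e : (if slt x z then X ^ e1 * (1 - X) *
        (if slt z b then X ^ e2 * (1 - X) else 0) else 0 : ℤ[X]) = 0 := by
      by_cases h : slt x z
      · have : ¬ slt z b := fun h' => hz ⟨h, h'⟩
        simp [this]
      · simp [h]
    rw [e, add_zero]
    by_cases hb : slt x b
    · rw [h2 hb hz]
    · simp [hb]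

lemma Nab_split {x z b : ℤ} (hxz : slt x z) (hzb : slt z b) (A : List ℤ)
    (hA : ∀ u ∈ A, u ≠ 0 ∧ u ≠ z) : Nab x b A = Nab x z A + Nab z b A := by
  induction A with
  | nil => rfl
  | cons u A ih =>
    obtain ⟨h0, h1⟩ := hA u (by simp)
    have hz : z ≠ 0 := by unfold slt at hxz; omega
    rw [Nab_cons, Nab_cons, Nab_cons, ih fun v hv => hA v (by simp [hv])]
    rcases slt_trichotomy h0 hz h1 with ⟨a1, a2⟩ | ⟨a1, a2⟩
    · simp [a1, a2, slt_trans a1 hzb]; ring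
    · simp [a1, a2, slt_trans hxz a1]; ring

lemma slt_neg_neg (x y : ℤ) : slt (-x) (-y) ↔ slt y x := by unfold slt; omega

lemma slt_neg_comm (x y : ℤ) : slt x (-y) ↔ slt y (-x) := by unfold slt; omega

lemma neg_slt_comm (x y : ℤ) : slt (-x) y ↔ slt (-y) x := by unfold slt; omega

/-- Moving the first entry from `x` to `z` through `(1,-j)` turns the letter `-z` in position `j`
into `-x`; together with the letter `-b` in position `q` the count of letters between `x` and `b`
is unchanged. -/
lemma reflected_count {x z b : ℤ} (hxz : slt x z) (hzb : slt z b) (hxb : b ≠ -x) :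
    ((if slt x (-b) ∧ slt (-b) z then 1 else 0) + (if slt z (-x) ∧ slt (-x) b then 1 else 0) : ℕ) =
      if slt x (-z) ∧ slt (-z) b then 1 else 0 := by
  have hx : -x ≠ 0 := by unfold slt at hxz; omega
  have hb : b ≠ 0 := by unfold slt at hzb; omega
  simp only [slt_neg_comm x b, slt_neg_comm x z, neg_slt_comm z b]
  rcases slt_trichotomy hb hx hxb with ⟨a1, a2⟩ | ⟨a1, a2⟩
  · simp [a1, a2, slt_trans hzb a1]
  · simp [a1, a2, slt_trans ((neg_slt_comm x b).1 a1) hxz]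

/-- The sum over the suffix of the chain that starts with `(1,-r)`, for `r = q + |B|`: the window
is `x A c B C` with `c` in position `q`. -/
lemma neg_stage {p q n : ℕ} (hp : 1 ≤ p) (hpq : p < q) (c : ℤ) (A : List ℤ)
    (hA : q = A.length + 2) (B : List ℤ) :
    ∀ (x : ℤ) (C : List ℤ), Good (x :: (A ++ c :: (B ++ C))) →
      (x :: (A ++ c :: (B ++ C))).length = n →
      chainSum (-c) (deltaSuffixNeg p (q + B.length)) (x :: (A ++ c :: (B ++ C))) =
        if slt x (-c) then X ^ (Nab x (-c) A + Nab x (-c) B + Nab x (-c) C +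
          Nab x (-c) (C.map Neg.neg) + if 0 < x ∧ -c < 0 then 1 else 0) * (1 - X) else 0 := by
  induction B using List.reverseRecOn with
  | nil =>
    intro x C hg hn
    obtain ⟨c, rfl⟩ : ∃ b, c = -b := ⟨-c, by simp⟩
    rw [neg_neg]
    simp only [List.nil_append, List.length_nil, Nat.add_zero] at hg hn ⊢
    have hg' := hg.swapNeg
    rw [neg_neg] at hg'
    obtain ⟨q, rfl⟩ : ∃ k, q = k + 1 := ⟨q - 1, by omega⟩
    rw [deltaSuffixNeg_succ (by omega), chainSum_neg hA hg]
    simp only [List.length_cons, List.length_append] at hn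
    rw [deltaSuffixNeg_zero (k := q) (n := n) hp le_rfl (by omega) (by omega) _ (by simp; omega) hg,
      deltaSuffixNeg_one (n := n) hp (by omega) _ (by simp; omega) hg']
    · simp [Nab_nil]
    · obtain rfl : q = A.length + 1 := by omega
      simp
  | append_singleton B z ih =>
    intro x C hg hn
    have ih1 := ih x (z :: C) (by simpa using hg) (by simpa using hn)
    have ih2 := ih (-z) ((-x) :: C)
    obtain ⟨z, rfl⟩ : ∃ y, z = -y := ⟨-z, by simp⟩
    rw [neg_neg] at ih2
    have e : x :: (A ++ c :: (B ++ [-z] ++ C)) = x :: ((A ++ c :: B) ++ (-z) :: C) := by simp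
    have e' : z :: (A ++ c :: (B ++ -x :: C)) = z :: ((A ++ c :: B) ++ (-x) :: C) := by simp
    rw [e] at hg hn ⊢
    have hg' := hg.swapNeg
    rw [neg_neg] at hg'
    rw [e'] at ih2
    have ih2 := ih2 hg' (by simpa using hn)
    have e1 : x :: (A ++ c :: (B ++ -z :: C)) = x :: ((A ++ c :: B) ++ (-z) :: C) := by simp
    rw [e1] at ih1
    rw [List.length_append, List.length_singleton, ← add_assoc, deltaSuffixNeg_succ (by omega),
      chainSum_neg (by simp; omega) hg, ih1, ih2]
    obtain ⟨⟨hx, hz, hxz, hxz'⟩, hl, hC⟩ := hg.facts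
    rw [neg_neg] at hxz'
    have hc := hl c (by simp)
    apply combine
    · intro s1 s2
      have n1 := Nab_split s1 s2 A (fun u hu => by
        have := hl u (by simp [hu]); rw [neg_neg] at this; exact ⟨this.1, this.2.2.2.2⟩)
      have n2 := Nab_split s1 s2 B (fun u hu => by
        have := hl u (by simp [hu]); rw [neg_neg] at this; exact ⟨this.1, this.2.2.2.2⟩)
      have n3 := Nab_split s1 s2 C (fun u hu => by
        have := hC u (by simp [hu]); rw [neg_neg] at this; exact ⟨this.1, this.2.2.2.2⟩)
      have n4 := Nab_split s1 s2 (C.map Neg.neg) (fun u hu => by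
        obtain ⟨v, hv, rfl⟩ := List.mem_map.1 hu
        have := hC v hv
        omega)
      have n5 := reflected_count s1 s2 (by omega)
      have n6 : ¬ (slt z x ∧ slt x (-c)) := by
        rintro ⟨h, -⟩; unfold slt at h s1; omega
      rw [neg_neg] at n5
      have n7 : ((if 0 < x ∧ z < 0 then 1 else 0) + (if 0 < z ∧ -c < 0 then 1 else 0) : ℕ) =
          if 0 < x ∧ -c < 0 then 1 else 0 := by
        clear n1 n2 n3 n4 n5 n6 ih ih1 ih2 hl hC
        unfold slt at s1 s2
        split_ifs <;> omega
      simp only [Nab_append, Nab_cons, Nab_nil, List.map_cons, neg_neg, s1, s2, and_self, if_true,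
        n6, if_false]
      omega
    · intro s1 s2
      simp only [Nab_append, Nab_cons, Nab_nil, List.map_cons, neg_neg, s2, if_false]
      omega

/-- The sum over the suffix of the chain that starts with `(1,-1)`. -/
lemma bar_stage {p q n : ℕ} (hp : 1 ≤ p) (hpq : p < q) {x c : ℤ} {A B : List ℤ}
    (hA : q = A.length + 2) (hg : Good (x :: (A ++ c :: B)))
    (hn : (x :: (A ++ c :: B)).length = n) :
    chainSum (-c) ((1, (-1 : ℤ)) :: deltaSuffixNeg p n) (x :: (A ++ c :: B)) =
      if slt x (-c) then X ^ (Nab x (-c) A + Nab x (-c) B +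
        if 0 < x ∧ x < c then 1 else 0) * (1 - X) else 0 := by
  have hn' : n = q + B.length := by
    simp only [List.length_cons, List.length_append] at hn; omega
  have hg' : Good ((-x) :: (A ++ c :: B)) := Good.negAt (A := []) hg
  have h1 := neg_stage (n := n) hp hpq c A hA B x [] (by simpa using hg) (by simpa using hn)
  have h2 := neg_stage (n := n) hp hpq c A hA B (-x) [] (by simpa using hg') (by simpa using hn)
  rw [← hn', List.append_nil] at h1 h2
  rw [chainSum_bar hg, h1, h2]
  obtain ⟨⟨hx, hc, hxc, hxc'⟩, hl, hB⟩ := hg.facts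
  apply combine
  · intro s1 s2
    have n1 := Nab_split s1 s2 A (fun u hu => ⟨(hl u hu).1, (hl u hu).2.2.1⟩)
    have n2 := Nab_split s1 s2 B (fun u hu => ⟨(hB u hu).1, (hB u hu).2.2.1⟩)
    have hx0 : 0 < x := by unfold slt at s1; omega
    have hc0 : 0 < c ∧ c < x := by unfold slt at s2; omega
    have n3 : ¬ (slt x c ∧ slt c (-x)) := by unfold slt; omega
    have n4 : ¬ (0 < x ∧ x < c) := by omega
    have n5 : ¬ (0 < -x ∧ -c < 0) := by omega
    have n6 : 0 < x ∧ -c < 0 := by omega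
    rw [if_neg n4, if_neg n5, if_pos n6]
    simp only [Nab_append, Nab_cons, Nab_nil, List.map_nil, n3, if_false, true_and, add_zero, zero_add]
    omega
  · intro s1 s2
    have : (0 < x ∧ -c < 0) ↔ (0 < x ∧ x < c) := by unfold slt at s1 s2; omega
    simp only [Nab_nil, List.map_nil, this, add_zero]

/-- The correction `[0 < x < c]` absorbs the letter `c` in position `q` when it lies between the
old first entry `x` and the new one `z`. -/
lemma tau_step {x z c : ℤ} (hz : z ≠ c) (hxz : slt x z) (hzb : slt z (-c)) :
    ((if slt x c ∧ slt c z then 1 else 0) + (if 0 < z ∧ z < c then 1 else 0) : ℕ) =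
      if 0 < x ∧ x < c then 1 else 0 := by
  have h : (slt x c ∧ slt c z) ↔ (0 < x ∧ x < c ∧ ¬ (0 < z ∧ z < c)) := by
    unfold slt at *; omega
  have h' : (0 < z ∧ z < c) → (0 < x ∧ x < c) := by unfold slt at *; omega
  by_cases a : 0 < z ∧ z < c
  · simp [h, a, h' a]
  · simp [h, a]

/-- The sum over the suffix of the chain that starts with `(1,s)`, where `s` is the position of
the first letter of `C` in the window `x A c B C`. -/
lemma pos_stage {p q n : ℕ} (hp : 1 ≤ p) (hpq : p < q) (c : ℤ) (A : List ℤ)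
    (hA : q = A.length + 2) (C : List ℤ) :
    ∀ (x : ℤ) (B : List ℤ) (s : ℕ), s = q + B.length + 1 → Good (x :: (A ++ c :: (B ++ C))) →
      (x :: (A ++ c :: (B ++ C))).length = n →
      chainSum (-c) ((List.range C.length).map (fun r => (1, ((s + r : ℕ) : ℤ))) ++
          (1, (-1 : ℤ)) :: deltaSuffixNeg p n) (x :: (A ++ c :: (B ++ C))) =
        if slt x (-c) then X ^ (Nab x (-c) A + Nab x (-c) B +
          if 0 < x ∧ x < c then 1 else 0) * (1 - X) else 0 := by
  induction C with
  | nil =>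
    intro x B s hs hg hn
    rw [List.append_nil] at hg hn ⊢
    exact bar_stage hp hpq hA hg hn
  | cons z C ih =>
    intro x B s hs hg hn
    have ih1 := ih x (B ++ [z]) (s + 1) (by simp; omega) (by simpa using hg) (by simpa using hn)
    have ih2 := ih z (B ++ [x]) (s + 1) (by simp; omega)
    have e : ∀ y u : ℤ, y :: (A ++ c :: (B ++ u :: C)) = y :: ((A ++ c :: B) ++ u :: C) := by simp
    have e' : ∀ y u : ℤ, y :: (A ++ c :: (B ++ [u] ++ C)) = y :: ((A ++ c :: B) ++ u :: C) := by
      simp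
    rw [e] at hg hn ⊢
    rw [e'] at ih1 ih2
    have ih2 := ih2 hg.swap (by simpa using hn)
    have ec : (List.range (z :: C).length).map (fun r => ((1, ((s + r : ℕ) : ℤ)) : ℕ × ℤ)) =
        (1, (s : ℤ)) :: (List.range C.length).map (fun r => (1, ((s + 1 + r : ℕ) : ℤ))) := by
      rw [List.length_cons, List.range_succ_eq_map]
      simp only [List.map_cons, List.map_map, Function.comp_def, Nat.add_zero]
      congr 1
      refine List.map_congr_left fun r _ => ?_
      rw [show s + r.succ = s + 1 + r by omega]
    rw [ec, List.cons_append, chainSum_pos (by simp; omega) hg, ih1, ih2]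
    obtain ⟨⟨hx, hz, hxz, hxz'⟩, hl, hC⟩ := hg.facts
    have hc := hl c (by simp)
    apply combine
    · intro s1 s2
      have n1 := Nab_split s1 s2 A (fun u hu => by
        have := hl u (by simp [hu]); exact ⟨this.1, this.2.2.2.1⟩)
      have n2 := Nab_split s1 s2 B (fun u hu => by
        have := hl u (by simp [hu]); exact ⟨this.1, this.2.2.2.1⟩)
      have n3 := tau_step hc.2.2.2.1.symm s1 s2
      have n6 : ¬ (slt z x ∧ slt x (-c)) := by
        rintro ⟨h, -⟩; unfold slt at h s1; omega
      simp only [Nab_append, Nab_cons, Nab_nil, s1, s2, and_self, if_true, n6, if_false]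
      omega
    · intro s1 s2
      simp only [Nab_append, Nab_cons, Nab_nil, s2, if_false]
      omega

lemma good_of_mem_allWindows {n : ℕ} {w : List ℤ} (hw : w ∈ allWindows n) :
    Good w ∧ w.length = n := by
  unfold allWindows at hw
  obtain ⟨⟨σ, ε⟩, -, rfl⟩ := Finset.mem_image.1 hw
  refine ⟨⟨?_, ?_⟩, by simp⟩
  · intro a ha
    obtain ⟨i, -, rfl⟩ := List.mem_map.1 ha
    simp only
    split_ifs <;> omega
  · rw [List.map_map]
    refine List.Nodup.map ?_ (List.nodup_finRange n)
    intro i j hij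
    have : (σ i : ℕ) = σ j := by
      simp only [Function.comp_apply] at hij
      split_ifs at hij <;> omega
    exact σ.injective (Fin.ext this)

/-- formula (6.8): the sum over increasing-admissible
subsequences of the suffix `Δ_s` for `p < q < s ≤ n`, with `c = w(q)`,
`b = -c`, `a = w(1) ≺ b`. -/
theorem delta_sum_pos_suffix (n : ℕ) (w : List ℤ) (hw : w ∈ allWindows n)
    (p q s : ℕ) (hp1 : 1 ≤ p) (hp2 : p ≤ n) (hpq : p < q) (hqs : q < s) (hsn : s ≤ n)
    (hab : slt (w.getD 0 0) (-(w.getD (q - 1) 0))) :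
    (∑ᶠ (J : Finset ℕ) (_ : J ⊆ Finset.range (deltaSuffixPos n p s).length ∧
        incChain w (selChain (deltaSuffixPos n p s) J) = true ∧
        (applyAll w (selChain (deltaSuffixPos n p s) J)).getD 0 0 = -(w.getD (q - 1) 0)),
      (Polynomial.X : Polynomial ℤ) ^
          ((len (applyAll w (selChain (deltaSuffixPos n p s) J)) - len w - J.card) / 2) *
        (1 - Polynomial.X) ^ J.card)
      = (Polynomial.X : Polynomial ℤ) ^
          (Nab (w.getD 0 0) (-(w.getD (q - 1) 0)) (word w 2 (q - 1)) +
            Nab (w.getD 0 0) (-(w.getD (q - 1) 0)) (word w (q + 1) (s - 1)) +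
            (if 0 < w.getD 0 0 ∧ w.getD 0 0 < w.getD (q - 1) 0 then 1 else 0)) *
          (1 - Polynomial.X) := by
  obtain ⟨hg, hn⟩ := good_of_mem_allWindows hw
  set D := deltaSuffixPos n p s with hDdef
  have hDeq : D = (List.range (n + 1 - s)).map (fun r => ((1, ((s + r : ℕ) : ℤ)) : ℕ × ℤ)) ++
      (1, (-1 : ℤ)) :: deltaSuffixNeg p n := by
    rw [hDdef, deltaSuffixPos, deltaSuffixNeg, List.append_assoc, List.singleton_append]
  have hD : ∀ t ∈ D, IsFirstRefl n t := by
    intro t ht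
    rw [hDeq] at ht
    rcases List.mem_append.1 ht with ht | ht
    · obtain ⟨r, hr, rfl⟩ := List.mem_map.1 ht
      have := List.mem_range.1 hr
      exact Or.inr ⟨s + r, by omega, by omega, Or.inl rfl⟩
    · rcases List.mem_cons.1 ht with rfl | ht
      · exact Or.inl rfl
      · obtain ⟨j, h1, h2, rfl⟩ := mem_deltaSuffixNeg ht
        exact Or.inr ⟨j, by omega, by omega, Or.inr rfl⟩
  have hsum : (∑ᶠ (J : Finset ℕ) (_ : J ⊆ Finset.range D.length ∧
        incChain w (selChain D J) = true ∧
        (applyAll w (selChain D J)).getD 0 0 = -(w.getD (q - 1) 0)),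
      (Polynomial.X : Polynomial ℤ) ^ ((len (applyAll w (selChain D J)) - len w - J.card) / 2) *
        (1 - Polynomial.X) ^ J.card) = chainSum (-(w.getD (q - 1) 0)) D w := by
    rw [← subSum_weight (by omega) _ D hD w hn hg, ← sum_powerset_selChain]
    unfold weight
    rw [← Finset.sum_filter, ← finsum_mem_coe_finset]
    refine finsum_congr fun J => ?_
    have hlen : (selChain D J).length = J.card := by simp [selChain]
    simp only [Finset.coe_filter, Set.mem_ofPred_eq, Finset.mem_powerset, hlen]
  rw [hsum]
  obtain ⟨x, A, c, E, rfl, hA⟩ := exists_split (j := q) hn (by omega) (by omega)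
  have hE : q + E.length = n := by simp at hn; omega
  obtain ⟨B, C, rfl, hB⟩ : ∃ B C, E = B ++ C ∧ B.length = s - 1 - q :=
    ⟨E.take (s - 1 - q), E.drop (s - 1 - q), by simp, by simp; omega⟩
  have hc : (x :: (A ++ c :: (B ++ C))).getD (q - 1) 0 = c := by
    rw [show q - 1 = A.length + 1 by omega]; simp
  have hw1 : word (x :: (A ++ c :: (B ++ C))) 2 (q - 1) = A := by
    rw [word, show q - 1 + 1 - 2 = A.length by omega]; simp
  have hw2 : word (x :: (A ++ c :: (B ++ C))) (q + 1) (s - 1) = B := by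
    rw [word, show q + 1 - 1 = (A.length + 1) + 1 by omega,
      show s - 1 + 1 - (q + 1) = B.length by omega, List.drop_succ_cons,
      List.drop_append]
    simp [List.drop_eq_nil_of_le]
  rw [hc] at hab ⊢
  rw [hw1, hw2]
  simp only [List.getD_cons_zero] at hab ⊢
  rw [hDeq, show n + 1 - s = C.length by simp at hE; omega,
    pos_stage (n := n) hp1 hpq c A hA C x B s (by omega) hg hn, if_pos hab]
end HL
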